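/- Fix 0 < q < 1/2 and the norm ‖·‖_q, and for m ∈ ℕ and finitely supported x define |x|_m = sup{(1/2)Σ_{i=1}^m ‖E_i x‖_q : m ≤ E_1 < ⋯ < E_m}. Let (y_i) be a block basis of the unit vectors of the finitely supported sequences (i.e. nonzero finitely supported vectors with max supp(y_j) < min supp(y_{j+1})) such that for every ε > 0 there exists m ∈ ℕ for which lim_{n→∞} |y_n|_m exists and 1 − ε < lim_{n→∞} |y_n|_m ≤ 1. Then limsup_{n→∞} ‖y_n‖_q > 1. -/

import Mathlib

/-!
Suppose `limsup ‖y_n‖_q ≤ 1`. A near-optimal family for `|y_n|_m` may be enlarged so that it partitions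
`ℕ` into `m` successive pieces, encoded as the fibres of a monotone labelling `ℕ → Fin m`. Take such a
partition `(E_i)` with `i < m₁` for a small `ε₁`, and a second one `(F_j)` with `j < m₂` for an `ε₂` that is
tiny compared with `1 / m₁`. For large `n` the support of `y = y_n` lies beyond `m₁ m₂`, so every partition of
`ℕ` into `m₁ m₂` successive pieces is admissible on `y`. Put `a_i = ‖E_i y‖` and `S_i = ∑_j ‖(E_i ∩ F_j) y‖`.

* The common refinement shows `(1/2) ∑ S_i ≤ ‖y‖`, and the triangle inequality gives
  `(1/2) ∑ S_i ≥ (1/2) ∑_j ‖F_j y‖ > 1 - ε₂`.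
* Leaving one `E_i` unrefined gives `(1/2) (∑ S - S_i + a_i) + q a_i ≤ ‖y‖` (`mixed_le`), hence
  `S_i ≥ (1 + 2 q) a_i` up to a small error.

Summing over `i`, `‖y‖ ≥ (1/2) ∑ S_i ≥ (1 + 2 q) (1 - ε₁)` up to a small error, and this exceeds `1` by a fixed
amount. Since `limsup` is junk on unbounded real sequences, boundedness of `‖y_n‖_q` is also needed;
it follows from `‖y_n‖_q ≤ 2 |y_n|_m`.
-/

noncomputable section

/-- sup norm of a finitely supported sequence -/
def supNorm (x : ℕ →₀ ℝ) : ℝ := ⨆ i, |x i|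

/-- coordinate restriction of `x` to the finite set `E` -/
def restr (E : Finset ℕ) (x : ℕ →₀ ℝ) : ℕ →₀ ℝ := x.filter (· ∈ E)

/-- an admissible family of `m` successive finite sets whose elements are `≥ n`. -/
def AdmissibleOn (n m : ℕ) (E : Fin m → Finset ℕ) : Prop :=
  (∀ i j : Fin m, i < j → ∀ a ∈ E i, ∀ b ∈ E j, a < b) ∧
  (∀ i : Fin m, ∀ a ∈ E i, n ≤ a)

/-- `n ≤ E 0 < ⋯ < E (n-1)` -/
def Admissible (n : ℕ) (E : Fin n → Finset ℕ) : Prop := AdmissibleOn n n E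

/-- the iteration defining the Tsirelson norm. -/
def tsAux : ℕ → (ℕ →₀ ℝ) → ℝ
  | 0, x => supNorm x
  | k + 1, x => max (supNorm x)
      (sSup {r : ℝ | ∃ (n : ℕ) (E : Fin n → Finset ℕ), 0 < n ∧ Admissible n E ∧
        r = (1 / 2) * ∑ i, tsAux k (restr (E i) x)})

/-- the Tsirelson norm `‖x‖_T = lim_k ‖x‖_k` on finitely supported sequences -/
def tsirelsonNorm (x : ℕ →₀ ℝ) : ℝ := ⨆ k, tsAux k x

/-- the iteration defining the norm `‖·‖_q`:  at each step
`‖x‖ = max (‖x‖_∞, sup {(1/2) ∑ ‖E_i x‖ + q max_j ‖E_j x‖ : n ≤ E_1 < ⋯ < E_n})`. -/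
def qAux (q : ℝ) : ℕ → (ℕ →₀ ℝ) → ℝ
  | 0, x => supNorm x
  | k + 1, x => max (supNorm x)
      (sSup {r : ℝ | ∃ (n : ℕ) (E : Fin n → Finset ℕ), 0 < n ∧ Admissible n E ∧
        r = (1 / 2) * (∑ i, qAux q k (restr (E i) x)) +
            q * ⨆ j : Fin n, qAux q k (restr (E j) x)})

/-- the norm `‖·‖_q`, the increasing limit of the iteration `qAux`. -/
def qNorm (q : ℝ) (x : ℕ →₀ ℝ) : ℝ := ⨆ k, qAux q k x


/-- `|x|_m = sup {(1/2) ∑_{i=1}^m ‖E_i x‖_q : m ≤ E_1 < ⋯ < E_m}`. -/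
def pNorm (q : ℝ) (m : ℕ) (x : ℕ →₀ ℝ) : ℝ :=
  sSup {r : ℝ | ∃ E : Fin m → Finset ℕ, Admissible m E ∧
    r = (1 / 2) * ∑ i, qNorm q (restr (E i) x)}

/-- a block sequence of the unit vector basis of `c₀₀`. -/
def IsBlockSeq (x : ℕ → (ℕ →₀ ℝ)) : Prop :=
  (∀ n, x n ≠ 0) ∧ ∀ n, ∀ p ∈ (x n).support, ∀ q ∈ (x (n + 1)).support, p < q

open Filter Finset

/-! ### Restrictions, the sup norm and the `ℓ₁` norm -/

lemma restr_apply (E : Finset ℕ) (x : ℕ →₀ ℝ) (a : ℕ) :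
    restr E x a = if a ∈ E then x a else 0 := by
  simp [restr, Finsupp.filter_apply]

lemma restr_restr (E F : Finset ℕ) (x : ℕ →₀ ℝ) : restr E (restr F x) = restr (E ∩ F) x := by
  ext a
  simp only [restr_apply, Finset.mem_inter]
  by_cases h1 : a ∈ E <;> by_cases h2 : a ∈ F <;> simp [h1, h2]

lemma restr_add (E : Finset ℕ) (x y : ℕ →₀ ℝ) : restr E (x + y) = restr E x + restr E y := by
  ext a
  simp only [restr_apply, Finsupp.add_apply]
  split_ifs <;> simp

lemma filter_eq_restr (p : ℕ → Prop) [DecidablePred p] (x : ℕ →₀ ℝ) :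
    x.filter p = restr (x.support.filter p) x := by
  ext a
  simp only [restr_apply, Finsupp.filter_apply, Finset.mem_filter, Finsupp.mem_support_iff]
  by_cases h1 : p a <;> by_cases h2 : x a = 0 <;> simp [h1, h2]

/-- The `ℓ₁` norm, which bounds every stage of the iteration from above. -/
def l1Norm (x : ℕ →₀ ℝ) : ℝ := ∑ a ∈ x.support, |x a|

lemma l1Norm_restr (E : Finset ℕ) (x : ℕ →₀ ℝ) :
    l1Norm (restr E x) = ∑ a ∈ x.support, if a ∈ E then |x a| else 0 := by
  unfold l1Norm
  rw [Finset.sum_subset (s₂ := x.support)]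
  · refine Finset.sum_congr rfl fun a _ => ?_
    rw [restr_apply]
    split_ifs <;> simp
  · intro a ha
    rw [Finsupp.mem_support_iff, restr_apply] at ha
    rw [Finsupp.mem_support_iff]
    intro h0
    simp [h0] at ha
  · intro a _ ha
    simpa using ha

lemma l1Norm_nonneg (x : ℕ →₀ ℝ) : 0 ≤ l1Norm x := Finset.sum_nonneg fun _ _ => abs_nonneg _

lemma abs_le_l1Norm (x : ℕ →₀ ℝ) (a : ℕ) : |x a| ≤ l1Norm x := by
  by_cases h : a ∈ x.support
  · exact Finset.single_le_sum (f := fun a => |x a|) (fun _ _ => abs_nonneg _) h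
  · rw [Finsupp.notMem_support_iff.1 h, abs_zero]
    exact l1Norm_nonneg x

lemma l1Norm_restr_le (E : Finset ℕ) (x : ℕ →₀ ℝ) : l1Norm (restr E x) ≤ l1Norm x := by
  rw [l1Norm_restr]
  refine Finset.sum_le_sum fun a _ => ?_
  split_ifs
  · exact le_rfl
  · exact abs_nonneg _

lemma sum_l1Norm_restr_le {n : ℕ} {E : Fin n → Finset ℕ} (hE : Admissible n E) (x : ℕ →₀ ℝ) :
    ∑ i, l1Norm (restr (E i) x) ≤ l1Norm x := by
  simp only [l1Norm_restr]
  rw [Finset.sum_comm]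
  refine Finset.sum_le_sum fun a _ => ?_
  by_cases h : ∃ i, a ∈ E i
  · obtain ⟨i, hi⟩ := h
    rw [Finset.sum_eq_single i]
    · simp [hi]
    · intro j _ hj
      rw [if_neg]
      intro haj
      rcases lt_or_gt_of_ne hj with h | h
      · exact lt_irrefl _ (hE.1 j i h a haj a hi)
      · exact lt_irrefl _ (hE.1 i j h a hi a haj)
    · simp
  · push Not at h
    simp [h]

lemma supNorm_bdd (x : ℕ →₀ ℝ) : BddAbove (Set.range fun i => |x i|) :=
  ⟨l1Norm x, by rintro _ ⟨a, rfl⟩; exact abs_le_l1Norm x a⟩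

lemma abs_le_supNorm (x : ℕ →₀ ℝ) (a : ℕ) : |x a| ≤ supNorm x := le_ciSup (supNorm_bdd x) a

lemma supNorm_nonneg (x : ℕ →₀ ℝ) : 0 ≤ supNorm x := (abs_nonneg _).trans (abs_le_supNorm x 0)

lemma supNorm_restr_le (E : Finset ℕ) (x : ℕ →₀ ℝ) : supNorm (restr E x) ≤ supNorm x := by
  refine ciSup_le fun a => ?_
  rw [restr_apply]
  split_ifs
  · exact abs_le_supNorm x a
  · simpa using supNorm_nonneg x

lemma supNorm_add_le (x y : ℕ →₀ ℝ) : supNorm (x + y) ≤ supNorm x + supNorm y :=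
  ciSup_le fun a => (abs_add_le _ _).trans (add_le_add (abs_le_supNorm x a) (abs_le_supNorm y a))

/-! ### The iteration `qAux` -/

lemma qAux_nonneg (q : ℝ) (k : ℕ) (x : ℕ →₀ ℝ) : 0 ≤ qAux q k x := by
  cases k with
  | zero => exact supNorm_nonneg x
  | succ k => exact (supNorm_nonneg x).trans (le_max_left _ _)

lemma fin_bdd {n : ℕ} (f : Fin n → ℝ) : BddAbove (Set.range f) := (Set.finite_range f).bddAbove

/-- A bound on `qAux q (k + 1) x` is a bound on the sup norm and on every admissible expression. -/
lemma qAux_succ_le {q : ℝ} {k : ℕ} {x : ℕ →₀ ℝ} {C : ℝ} (h0 : supNorm x ≤ C)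
    (h : ∀ (n : ℕ) (E : Fin n → Finset ℕ), 0 < n → Admissible n E →
      (1 / 2) * (∑ i, qAux q k (restr (E i) x)) + q * ⨆ j : Fin n, qAux q k (restr (E j) x) ≤ C) :
    qAux q (k + 1) x ≤ C := by
  refine max_le h0 (Real.sSup_le ?_ ((supNorm_nonneg x).trans h0))
  rintro r ⟨n, E, hn, hE, rfl⟩
  exact h n E hn hE

/-- If the iterate `k` is below the `ℓ₁` norm, so are the admissible expressions built from it;
this uses `1 / 2 + q ≤ 1`. -/
lemma expr_le_l1Norm {q : ℝ} (hq0 : 0 < q) (hq1 : q < 1 / 2) {k : ℕ}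
    (ih : ∀ x, qAux q k x ≤ l1Norm x) (x : ℕ →₀ ℝ) {n : ℕ} {E : Fin n → Finset ℕ}
    (hn : 0 < n) (hE : Admissible n E) :
    (1 / 2) * (∑ i, qAux q k (restr (E i) x)) + q * (⨆ j : Fin n, qAux q k (restr (E j) x))
      ≤ l1Norm x := by
  have : Nonempty (Fin n) := ⟨⟨0, hn⟩⟩
  have h1 : ∑ i, qAux q k (restr (E i) x) ≤ l1Norm x :=
    (Finset.sum_le_sum fun i _ => ih _).trans (sum_l1Norm_restr_le hE x)
  have h2 : (⨆ j : Fin n, qAux q k (restr (E j) x)) ≤ l1Norm x :=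
    ciSup_le fun j => (ih _).trans (l1Norm_restr_le _ _)
  nlinarith [l1Norm_nonneg x]

lemma qAux_le_l1Norm {q : ℝ} (hq0 : 0 < q) (hq1 : q < 1 / 2) (k : ℕ) (x : ℕ →₀ ℝ) :
    qAux q k x ≤ l1Norm x := by
  induction k generalizing x with
  | zero => exact ciSup_le fun a => abs_le_l1Norm x a
  | succ k ih =>
    exact qAux_succ_le (ciSup_le fun a => abs_le_l1Norm x a)
      fun n E hn hE => expr_le_l1Norm hq0 hq1 ih x hn hE

lemma expr_le_qAux_succ {q : ℝ} (hq0 : 0 < q) (hq1 : q < 1 / 2) (k : ℕ) (x : ℕ →₀ ℝ)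
    {n : ℕ} {E : Fin n → Finset ℕ} (hn : 0 < n) (hE : Admissible n E) :
    (1 / 2) * (∑ i, qAux q k (restr (E i) x)) + q * (⨆ j : Fin n, qAux q k (restr (E j) x))
      ≤ qAux q (k + 1) x := by
  refine le_trans (le_csSup ?_ ?_) (le_max_right _ _)
  rotate_left
  · exact ⟨n, E, hn, hE, rfl⟩
  refine ⟨l1Norm x, ?_⟩
  rintro r ⟨n, E, hn, hE, rfl⟩
  exact expr_le_l1Norm hq0 hq1 (qAux_le_l1Norm hq0 hq1 k) x hn hE

lemma qAux_mono {q : ℝ} (hq0 : 0 < q) (hq1 : q < 1 / 2) (x : ℕ →₀ ℝ) :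
    Monotone fun k => qAux q k x := by
  refine monotone_nat_of_le_succ fun k => ?_
  induction k generalizing x with
  | zero => exact le_max_left _ _
  | succ k ih =>
    refine qAux_succ_le (le_max_left _ _) fun n E hn hE =>
      le_trans ?_ (expr_le_qAux_succ hq0 hq1 (k + 1) x hn hE)
    have h1 := Finset.sum_le_sum fun (i : Fin n) (_ : i ∈ Finset.univ) => ih (restr (E i) x)
    have h2 := ciSup_mono (fin_bdd _) fun i : Fin n => ih (restr (E i) x)
    have h3 := mul_le_mul_of_nonneg_left h2 hq0.le
    linarith

lemma qAux_restr_le {q : ℝ} (hq0 : 0 < q) (hq1 : q < 1 / 2) (k : ℕ) (F : Finset ℕ)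
    (x : ℕ →₀ ℝ) : qAux q k (restr F x) ≤ qAux q k x := by
  cases k with
  | zero => exact supNorm_restr_le F x
  | succ k =>
    refine qAux_succ_le ((supNorm_restr_le F x).trans (le_max_left _ _)) fun n E hn hE => ?_
    simp only [restr_restr]
    refine expr_le_qAux_succ (E := fun i => E i ∩ F) hq0 hq1 k x hn ⟨?_, ?_⟩
    · intro i j hij a ha b hb
      exact hE.1 i j hij a (Finset.mem_inter.1 ha).1 b (Finset.mem_inter.1 hb).1
    · intro i a ha
      exact hE.2 i a (Finset.mem_inter.1 ha).1

lemma qAux_add_le {q : ℝ} (hq0 : 0 < q) (hq1 : q < 1 / 2) (k : ℕ) (x y : ℕ →₀ ℝ) :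
    qAux q k (x + y) ≤ qAux q k x + qAux q k y := by
  induction k generalizing x y with
  | zero => exact supNorm_add_le x y
  | succ k ih =>
    refine qAux_succ_le ((supNorm_add_le x y).trans
      (add_le_add (le_max_left _ _) (le_max_left _ _))) fun n E hn hE => ?_
    have : Nonempty (Fin n) := ⟨⟨0, hn⟩⟩
    refine le_trans ?_ (add_le_add (expr_le_qAux_succ hq0 hq1 k x hn hE)
      (expr_le_qAux_succ hq0 hq1 k y hn hE))
    simp only [restr_add]
    have h1 := Finset.sum_le_sum fun (i : Fin n) (_ : i ∈ Finset.univ) =>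
      ih (restr (E i) x) (restr (E i) y)
    rw [Finset.sum_add_distrib] at h1
    have h2 : (⨆ j : Fin n, qAux q k (restr (E j) x + restr (E j) y)) ≤
        (⨆ j : Fin n, qAux q k (restr (E j) x)) + ⨆ j : Fin n, qAux q k (restr (E j) y) :=
      ciSup_le fun j => (ih _ _).trans (add_le_add
        (le_ciSup (f := fun j => qAux q k (restr (E j) x)) (fin_bdd _) j)
        (le_ciSup (f := fun j => qAux q k (restr (E j) y)) (fin_bdd _) j))
    have h3 := mul_le_mul_of_nonneg_left h2 hq0.le
    linarith

/-! ### The norm `qNorm` -/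

lemma qAux_tendsto {q : ℝ} (hq0 : 0 < q) (hq1 : q < 1 / 2) (x : ℕ →₀ ℝ) :
    Tendsto (fun k => qAux q k x) atTop (nhds (qNorm q x)) :=
  tendsto_atTop_ciSup (qAux_mono hq0 hq1 x)
    ⟨l1Norm x, by rintro _ ⟨k, rfl⟩; exact qAux_le_l1Norm hq0 hq1 k x⟩

lemma qAux_le_qNorm {q : ℝ} (hq0 : 0 < q) (hq1 : q < 1 / 2) (k : ℕ) (x : ℕ →₀ ℝ) :
    qAux q k x ≤ qNorm q x :=
  (qAux_mono hq0 hq1 x).ge_of_tendsto (qAux_tendsto hq0 hq1 x) k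

lemma qNorm_nonneg {q : ℝ} (hq0 : 0 < q) (hq1 : q < 1 / 2) (x : ℕ →₀ ℝ) : 0 ≤ qNorm q x :=
  (qAux_nonneg q 0 x).trans (qAux_le_qNorm hq0 hq1 0 x)

lemma qNorm_zero {q : ℝ} (hq0 : 0 < q) (hq1 : q < 1 / 2) : qNorm q 0 = 0 := by
  refine le_antisymm (ciSup_le fun k => ?_) (qNorm_nonneg hq0 hq1 0)
  simpa [l1Norm] using qAux_le_l1Norm hq0 hq1 k 0

lemma qNorm_restr_le {q : ℝ} (hq0 : 0 < q) (hq1 : q < 1 / 2) (F : Finset ℕ) (x : ℕ →₀ ℝ) :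
    qNorm q (restr F x) ≤ qNorm q x :=
  ciSup_le fun k => (qAux_restr_le hq0 hq1 k F x).trans (qAux_le_qNorm hq0 hq1 k x)

lemma qNorm_add_le {q : ℝ} (hq0 : 0 < q) (hq1 : q < 1 / 2) (x y : ℕ →₀ ℝ) :
    qNorm q (x + y) ≤ qNorm q x + qNorm q y :=
  ciSup_le fun k => (qAux_add_le hq0 hq1 k x y).trans
    (add_le_add (qAux_le_qNorm hq0 hq1 k x) (qAux_le_qNorm hq0 hq1 k y))

/-- The half of the implicit equation that is needed: admissible expressions, with the maximum
replaced by any one of its terms, are at most the norm. -/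
lemma expr_le_qNorm {q : ℝ} (hq0 : 0 < q) (hq1 : q < 1 / 2) (x : ℕ →₀ ℝ)
    {n : ℕ} {E : Fin n → Finset ℕ} (hE : Admissible n E) (j : Fin n) :
    (1 / 2) * (∑ i, qNorm q (restr (E i) x)) + q * qNorm q (restr (E j) x) ≤ qNorm q x := by
  have h1 : Tendsto (fun k => (1 / 2) * (∑ i, qAux q k (restr (E i) x))
      + q * qAux q k (restr (E j) x)) atTop
      (nhds ((1 / 2) * (∑ i, qNorm q (restr (E i) x)) + q * qNorm q (restr (E j) x))) :=
    ((tendsto_finsetSum _ fun i _ => qAux_tendsto hq0 hq1 _).const_mul _).add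
      ((qAux_tendsto hq0 hq1 _).const_mul _)
  refine le_of_tendsto' h1 fun k => ?_
  have h2 := le_ciSup (f := fun j => qAux q k (restr (E j) x)) (fin_bdd _) j
  have h3 := mul_le_mul_of_nonneg_left h2 hq0.le
  have h4 := expr_le_qAux_succ hq0 hq1 k x (Fin.pos j) hE
  have h5 := qAux_le_qNorm hq0 hq1 (k + 1) x
  linarith

/-! ### Monotone labellings -/

/-- The fibres of a monotone labelling `g : ℕ → Fin M` form an admissible family on any vector
supported in `[M, ∞)`. -/
lemma label_le_qNorm {q : ℝ} (hq0 : 0 < q) (hq1 : q < 1 / 2) {M : ℕ} (x : ℕ →₀ ℝ)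
    (hx : ∀ a ∈ x.support, M ≤ a) (g : ℕ → Fin M) (hg : Monotone g) (c : Fin M) :
    (1 / 2) * (∑ i, qNorm q (x.filter fun a => g a = i)) + q * qNorm q (x.filter fun a => g a = c)
      ≤ qNorm q x := by
  simp only [filter_eq_restr]
  refine expr_le_qNorm (E := fun i => x.support.filter fun a => g a = i) hq0 hq1 x ⟨?_, ?_⟩ c
  · intro i j hij a ha b hb
    rw [Finset.mem_filter] at ha hb
    by_contra hab
    have := hg (not_lt.1 hab)
    rw [ha.2, hb.2] at this
    exact absurd hij (not_lt.2 this)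
  · intro i a ha
    exact hx a (Finset.mem_filter.1 ha).1

/-- Every admissible family is contained, set by set, in the fibres of a monotone labelling:
`a` receives the largest `i` such that `E i` has an element `≤ a`. -/
lemma exists_label {n : ℕ} (hn : 0 < n) {E : Fin n → Finset ℕ} (hE : Admissible n E) :
    ∃ e : ℕ → Fin n, Monotone e ∧ ∀ i, ∀ a ∈ E i, e a = i := by
  classical
  obtain ⟨m, rfl⟩ : ∃ m, n = m + 1 := ⟨n - 1, by omega⟩
  refine ⟨fun a => (Finset.univ.filter fun i => ∃ b ∈ E i, b ≤ a).sup id, ?_, ?_⟩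
  · intro a a' haa
    refine Finset.sup_mono fun i hi => ?_
    simp only [Finset.mem_filter, Finset.mem_univ, true_and] at hi ⊢
    obtain ⟨b, hb, hba⟩ := hi
    exact ⟨b, hb, hba.trans haa⟩
  · intro i a ha
    apply le_antisymm
    · refine Finset.sup_le fun j hj => ?_
      simp only [Finset.mem_filter, Finset.mem_univ, true_and] at hj
      obtain ⟨b, hb, hba⟩ := hj
      by_contra hij
      exact absurd (hE.1 i j (not_le.1 hij) a ha b hb) (not_lt.2 hba)
    · exact Finset.le_sup (f := id) (by simpa using ⟨a, ha, le_rfl⟩)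

lemma pNorm_bdd {q : ℝ} (hq0 : 0 < q) (hq1 : q < 1 / 2) (m : ℕ) (x : ℕ →₀ ℝ) :
    BddAbove {r : ℝ | ∃ E : Fin m → Finset ℕ, Admissible m E ∧
      r = (1 / 2) * ∑ i, qNorm q (restr (E i) x)} := by
  refine ⟨(1 / 2) * ∑ _i : Fin m, qNorm q x, ?_⟩
  rintro r ⟨E, _, rfl⟩
  have := Finset.sum_le_sum fun (i : Fin m) (_ : i ∈ Finset.univ) =>
    qNorm_restr_le hq0 hq1 (E i) x
  linarith

/-- A lower bound on `|x|_m` is witnessed by the fibres of a monotone labelling. -/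
lemma exists_label_of_lt_pNorm {q : ℝ} (hq0 : 0 < q) (hq1 : q < 1 / 2) {m : ℕ} (hm : 0 < m)
    {x : ℕ →₀ ℝ} {t : ℝ} (ht : t < pNorm q m x) :
    ∃ e : ℕ → Fin m, Monotone e ∧ t < (1 / 2) * ∑ i, qNorm q (x.filter fun a => e a = i) := by
  have hne : {r : ℝ | ∃ E : Fin m → Finset ℕ, Admissible m E ∧
      r = (1 / 2) * ∑ i, qNorm q (restr (E i) x)}.Nonempty :=
    ⟨_, fun _ => ∅, ⟨by simp, by simp⟩, rfl⟩
  obtain ⟨r, ⟨E, hE, rfl⟩, hr⟩ := exists_lt_of_lt_csSup hne ht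
  obtain ⟨e, he, heE⟩ := exists_label hm hE
  refine ⟨e, he, hr.trans_le ?_⟩
  have : ∀ i, qNorm q (restr (E i) x) ≤ qNorm q (x.filter fun a => e a = i) := by
    intro i
    have h1 : restr (E i) x = restr (E i) (x.filter fun a => e a = i) := by
      ext a
      rw [restr_apply, restr_apply, Finsupp.filter_apply]
      split_ifs with h1 h2
      · rfl
      · exact absurd (heE i a h1) h2
      · rfl
    rw [h1]
    exact qNorm_restr_le hq0 hq1 _ _
  have := Finset.sum_le_sum fun (i : Fin m) (_ : i ∈ Finset.univ) => this i
  linarith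

lemma qNorm_le_two_pNorm {q : ℝ} (hq0 : 0 < q) (hq1 : q < 1 / 2) {m : ℕ} (hm : 0 < m)
    {x : ℕ →₀ ℝ} (hx : ∀ a ∈ x.support, m ≤ a) : qNorm q x ≤ 2 * pNorm q m x := by
  let E : Fin m → Finset ℕ := fun i => if i = ⟨0, hm⟩ then x.support else ∅
  have hE : Admissible m E := by
    refine ⟨?_, ?_⟩
    · intro i j hij a _ b hb
      have : j ≠ ⟨0, hm⟩ := by
        rintro rfl
        exact absurd hij (by simp [Fin.lt_def])
      simp [E, this] at hb
    · intro i a ha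
      by_cases h : i = ⟨0, hm⟩
      · simp only [E, h, if_true] at ha
        exact hx a ha
      · simp [E, h] at ha
  have h1 : (1 / 2) * ∑ i, qNorm q (restr (E i) x) ≤ pNorm q m x :=
    le_csSup (pNorm_bdd hq0 hq1 m x) ⟨E, hE, rfl⟩
  have h2 : qNorm q (restr (E ⟨0, hm⟩) x) ≤ ∑ i, qNorm q (restr (E i) x) :=
    Finset.single_le_sum (f := fun i => qNorm q (restr (E i) x))
      (fun i _ => qNorm_nonneg hq0 hq1 _) (Finset.mem_univ _)
  have h3 : restr (E ⟨0, hm⟩) x = x := by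
    ext a
    rw [restr_apply]
    simp only [E, if_true]
    split_ifs with h
    · rfl
    · exact (Finsupp.notMem_support_iff.1 h).symm
  rw [h3] at h2
  linarith

/-! ### Refining two labellings -/

lemma monotone_pair {m₁ m₂ : ℕ} {e : ℕ → Fin m₁} (he : Monotone e) {f : ℕ → Fin m₂}
    (hf : ∀ a b, a ≤ b → e a = e b → f a ≤ f b) :
    Monotone fun a => (finProdFinEquiv (e a, f a) : Fin (m₁ * m₂)) := by
  intro a b hab
  rw [Fin.le_def]
  simp only [finProdFinEquiv_apply_val]
  rcases (he hab).lt_or_eq with h | h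
  · have h1 : (e a : ℕ) + 1 ≤ e b := h
    have h2 := Nat.mul_le_mul_left m₂ h1
    have h3 := (f a).2
    rw [Nat.mul_add] at h2
    omega
  · have h1 : (f a : ℕ) ≤ f b := hf a b hab h
    rw [h]
    omega

/-- The family with members `E_i ∩ F_j`, used as an admissible family: for labellings `e` and `f`, where
`f` need only be monotone on the fibres of `e`. -/
lemma pair_le {q : ℝ} (hq0 : 0 < q) (hq1 : q < 1 / 2) {m₁ m₂ : ℕ} (x : ℕ →₀ ℝ)
    (hx : ∀ a ∈ x.support, m₁ * m₂ ≤ a) {e : ℕ → Fin m₁} (he : Monotone e) {f : ℕ → Fin m₂}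
    (hf : ∀ a b, a ≤ b → e a = e b → f a ≤ f b) (i : Fin m₁) (j : Fin m₂) :
    (1 / 2) * (∑ i, ∑ j, qNorm q (x.filter fun a => e a = i ∧ f a = j))
      + q * qNorm q (x.filter fun a => e a = i ∧ f a = j) ≤ qNorm q x := by
  have h := label_le_qNorm hq0 hq1 x hx _ (monotone_pair he hf) (finProdFinEquiv (i, j))
  rw [← finProdFinEquiv.sum_comp, Fintype.sum_prod_type] at h
  simpa only [EmbeddingLike.apply_eq_iff_eq, Prod.mk.injEq] using h

/-- All pieces `E_{i'}` are refined by the `F_j` except the piece `E_i`, which is kept whole and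
contributes the maximum term. -/
lemma mixed_le {q : ℝ} (hq0 : 0 < q) (hq1 : q < 1 / 2) {m₁ m₂ : ℕ} (hm₂ : 0 < m₂) (x : ℕ →₀ ℝ)
    (hx : ∀ a ∈ x.support, m₁ * m₂ ≤ a) {e : ℕ → Fin m₁} (he : Monotone e) {f : ℕ → Fin m₂}
    (hf : Monotone f) (i : Fin m₁) :
    (1 / 2) * ((∑ i, ∑ j, qNorm q (x.filter fun a => e a = i ∧ f a = j))
        - (∑ j, qNorm q (x.filter fun a => e a = i ∧ f a = j))
        + qNorm q (x.filter fun a => e a = i))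
      + q * qNorm q (x.filter fun a => e a = i) ≤ qNorm q x := by
  -- constant on the fibre over `i`, equal to `f` elsewhere
  let f' : ℕ → Fin m₂ := fun a => if e a = i then ⟨0, hm₂⟩ else f a
  have hf' : ∀ a b, a ≤ b → e a = e b → f' a ≤ f' b := by
    intro a b hab h
    simp only [f', h]
    split_ifs
    · exact le_rfl
    · exact hf hab
  have h := pair_le hq0 hq1 x hx he hf' i ⟨0, hm₂⟩
  have hi : ∀ j, (x.filter fun a => e a = i ∧ f' a = j)
      = if j = ⟨0, hm₂⟩ then x.filter (fun a => e a = i) else 0 := by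
    intro j
    ext a
    by_cases hj : j = ⟨0, hm₂⟩
    · rw [if_pos hj, Finsupp.filter_apply, Finsupp.filter_apply]
      by_cases ha : e a = i <;> simp [f', ha, hj]
    · rw [if_neg hj, Finsupp.filter_apply]
      by_cases ha : e a = i <;> simp [f', ha, Ne.symm hj]
  have hi' : ∀ i', i' ≠ i → ∀ j, (x.filter fun a => e a = i' ∧ f' a = j)
      = x.filter fun a => e a = i' ∧ f a = j := by
    intro i' hii j
    ext a
    rw [Finsupp.filter_apply, Finsupp.filter_apply]
    by_cases ha : e a = i'
    · simp [f', ha, hii]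
    · simp [ha]
  have hs : ∑ j, qNorm q (x.filter fun a => e a = i ∧ f' a = j)
      = qNorm q (x.filter fun a => e a = i) := by
    rw [Finset.sum_eq_single ⟨0, hm₂⟩]
    · rw [hi, if_pos rfl]
    · intro j _ hj
      rw [hi, if_neg hj, qNorm_zero hq0 hq1]
    · simp
  have hd1 := Finset.add_sum_erase Finset.univ
    (fun i => ∑ j, qNorm q (x.filter fun a => e a = i ∧ f' a = j)) (Finset.mem_univ i)
  have hd2 := Finset.add_sum_erase Finset.univ
    (fun i => ∑ j, qNorm q (x.filter fun a => e a = i ∧ f a = j)) (Finset.mem_univ i)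
  have hd3 : ∑ i' ∈ Finset.univ.erase i, ∑ j, qNorm q (x.filter fun a => e a = i' ∧ f' a = j)
      = ∑ i' ∈ Finset.univ.erase i, ∑ j, qNorm q (x.filter fun a => e a = i' ∧ f a = j) := by
    refine Finset.sum_congr rfl fun i' hi1 => Finset.sum_congr rfl fun j _ => ?_
    rw [hi' i' (Finset.ne_of_mem_erase hi1)]
  have h0 := hi ⟨0, hm₂⟩
  rw [if_pos rfl] at h0
  rw [h0] at h
  simp only [hs] at hd1
  linarith

lemma sum_le_sum_pair {q : ℝ} (hq0 : 0 < q) (hq1 : q < 1 / 2) {m₁ m₂ : ℕ} (x : ℕ →₀ ℝ)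
    (e : ℕ → Fin m₁) (f : ℕ → Fin m₂) :
    ∑ j, qNorm q (x.filter fun a => f a = j)
      ≤ ∑ i, ∑ j, qNorm q (x.filter fun a => e a = i ∧ f a = j) := by
  rw [Finset.sum_comm]
  refine Finset.sum_le_sum fun j _ => ?_
  have h : (x.filter fun a => f a = j) = ∑ i, x.filter fun a => e a = i ∧ f a = j := by
    ext a
    rw [Finsupp.finsetSum_apply]
    simp only [Finsupp.filter_apply]
    by_cases hj : f a = j <;> simp [hj]
  rw [h]
  exact Finset.le_sum_of_subadditive _ (qNorm_zero hq0 hq1).le (qNorm_add_le hq0 hq1) _ _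

/-- The quantitative core: two near-optimal partitions, the second optimal up to `η` with `η m₁` small,
cannot coexist with `‖x‖_q ≤ 1 + η`. -/
lemma core {q : ℝ} (hq0 : 0 < q) (hq1 : q < 1 / 2) {m₁ m₂ : ℕ} (hm₂ : 0 < m₂)
    (x : ℕ →₀ ℝ) (hx : ∀ a ∈ x.support, m₁ * m₂ ≤ a) {η : ℝ}
    (hη : η * (1 + 2 * m₁) < q) (hN : qNorm q x ≤ 1 + η)
    {e : ℕ → Fin m₁} (he : Monotone e) {f : ℕ → Fin m₂} (hf : Monotone f)
    (h1 : 1 - q / 2 < (1 / 2) * ∑ i, qNorm q (x.filter fun a => e a = i))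
    (h2 : 1 - η < (1 / 2) * ∑ j, qNorm q (x.filter fun a => f a = j)) : False := by
  have hm₁ : 0 < m₁ := Fin.pos (e 0)
  set S : ℝ := ∑ i, ∑ j, qNorm q (x.filter fun a => e a = i ∧ f a = j) with hS
  have hF := sum_le_sum_pair hq0 hq1 x e f
  have hT : (1 / 2) * S ≤ 1 + η := by
    have h3 := pair_le hq0 hq1 x hx he (fun a b hab _ => hf hab) ⟨0, hm₁⟩ ⟨0, hm₂⟩
    have h4 := mul_nonneg hq0.le (qNorm_nonneg hq0 hq1
      (x.filter fun a => e a = ⟨0, hm₁⟩ ∧ f a = ⟨0, hm₂⟩))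
    linarith
  have hsum : ∑ i : Fin m₁, ((1 + 2 * q) * qNorm q (x.filter fun a => e a = i) - 4 * η)
      ≤ S := by
    refine Finset.sum_le_sum fun i _ => ?_
    have := mixed_le hq0 hq1 hm₂ x hx he hf i
    linarith
  rw [Finset.sum_sub_distrib, ← Finset.mul_sum] at hsum
  simp only [Finset.sum_const, Finset.card_univ, Fintype.card_fin, nsmul_eq_mul] at hsum
  nlinarith

lemma le_of_mem_support {y : ℕ → (ℕ →₀ ℝ)} (hy : IsBlockSeq y) (n : ℕ) :
    ∀ a ∈ (y n).support, n ≤ a := by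
  induction n with
  | zero => simp
  | succ n ih =>
    intro a ha
    obtain ⟨b, hb⟩ := Finsupp.support_nonempty_iff.2 (hy.1 n)
    exact (Nat.succ_le_succ (ih b hb)).trans (hy.2 n b hb a ha)

lemma pos_of_tendsto_pNorm {q L : ℝ} {m : ℕ} {y : ℕ → (ℕ →₀ ℝ)}
    (h : Tendsto (fun n => pNorm q m (y n)) atTop (nhds L)) (hL : 0 < L) : 0 < m := by
  rcases Nat.eq_zero_or_pos m with rfl | hm
  · have h0 : ∀ x, pNorm q 0 x = 0 := by
      intro x
      have : {r : ℝ | ∃ E : Fin 0 → Finset ℕ, Admissible 0 E ∧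
          r = (1 / 2) * ∑ i, qNorm q (restr (E i) x)} = {0} := by
        ext r
        simp only [Finset.univ_eq_empty, Finset.sum_empty, mul_zero, Set.mem_ofPred_eq,
          Set.mem_singleton_iff]
        exact ⟨fun ⟨_, _, h⟩ => h, fun h => ⟨fun _ => ∅, ⟨by simp, by simp⟩, h⟩⟩
      rw [pNorm, this, csSup_singleton]
    simp only [h0] at h
    exact absurd (tendsto_nhds_unique h tendsto_const_nhds) hL.ne'
  · exact hm

/-- Let `(y_i)` be a block basis of the unit vectors such that for every `ε > 0`
there is an `m` for which `lim_n |y_n|_m` exists and lies in `(1 - ε, 1]`.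
Then `limsup_n ‖y_n‖_q > 1`. -/
theorem stmt14 (q : ℝ) (hq0 : 0 < q) (hq1 : q < 1 / 2)
    (y : ℕ → (ℕ →₀ ℝ)) (hblock : IsBlockSeq y)
    (h : ∀ ε : ℝ, 0 < ε → ∃ (m : ℕ) (L : ℝ),
      Filter.Tendsto (fun n => pNorm q m (y n)) Filter.atTop (nhds L) ∧
      1 - ε < L ∧ L ≤ 1) :
    1 < Filter.limsup (fun n => qNorm q (y n)) Filter.atTop := by
  obtain ⟨m₁, L₁, hL₁, hlt₁, hle₁⟩ := h (q / 2) (by linarith)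
  have hm₁ : 0 < m₁ := pos_of_tendsto_pNorm hL₁ (by linarith)
  obtain ⟨η, hη0, hη1, hη⟩ : ∃ η : ℝ, 0 < η ∧ η < 1 ∧ η * (1 + 2 * m₁) < q := by
    have hp : (0 : ℝ) < 1 + 2 * m₁ := by positivity
    refine ⟨q / (2 * (1 + 2 * m₁)), by positivity, ?_, ?_⟩
    · rw [div_lt_one (by positivity)]
      have : (0 : ℝ) ≤ m₁ := Nat.cast_nonneg _
      linarith
    · have : q / (2 * (1 + 2 * m₁)) * (1 + 2 * m₁) = q / 2 := by field_simp
      rw [this]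
      linarith
  obtain ⟨m₂, L₂, hL₂, hlt₂, hle₂⟩ := h η hη0
  have hm₂ : 0 < m₂ := pos_of_tendsto_pNorm hL₂ (by linarith)
  by_contra hcon
  have hbdd : IsBoundedUnder (· ≤ ·) atTop fun n => qNorm q (y n) := by
    refine ⟨4, ?_⟩
    rw [eventually_map]
    filter_upwards [hL₁.eventually_lt_const (show L₁ < 2 by linarith), eventually_ge_atTop m₁]
      with n hn hmn
    have := qNorm_le_two_pNorm hq0 hq1 hm₁ (x := y n)
      fun a ha => hmn.trans (le_of_mem_support hblock n a ha)
    linarith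
  have hN := eventually_lt_of_limsup_lt (lt_of_le_of_lt (not_lt.1 hcon)
    (show (1 : ℝ) < 1 + η by linarith)) hbdd
  obtain ⟨n, hn, h1, h2, hmn⟩ := (hN.and ((hL₁.eventually_const_lt hlt₁).and
    ((hL₂.eventually_const_lt hlt₂).and (eventually_ge_atTop (m₁ * m₂))))).exists
  obtain ⟨e, he, he'⟩ := exists_label_of_lt_pNorm hq0 hq1 hm₁ h1
  obtain ⟨f, hf, hf'⟩ := exists_label_of_lt_pNorm hq0 hq1 hm₂ h2
  exact core hq0 hq1 hm₂ (y n) (fun a ha => hmn.trans (le_of_mem_support hblock n a ha)) hη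
    hn.le he hf he' hf'
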